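/- arXiv:0706.1418 — 9 statements merged into one kernel-verified Lean document; each statement's English description precedes it below -/
import Mathlib

section
/- Let (S, Φ) be a complete Menger space under Min whose probabilistic metric takes values in D⁺, and let f : S → S be a B-contraction, i.e., there exists h ∈ (0,1) such that F_{fp,fq}(ht) ≥ F_{p,q}(t) for all p, q ∈ S and t > 0. Then f has a unique fixed point r ∈ S, and for every p ∈ S the sequence of iterates f^n p converges to r (that is, F_{f^n p, r}(t) → 1 as n → ∞ for every t > 0). -/
open Filter

/-- A distance distribution function: nondecreasing, left-continuous on `(0,∞)`,
with values in `[0,1]` and vanishing on `(-∞,0]`. -/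
def IsDDF (F : ℝ → ℝ) : Prop :=
  Monotone F ∧ (∀ t : ℝ, 0 < t → ContinuousWithinAt F (Set.Iio t) t) ∧
    (∀ t : ℝ, 0 ≤ F t ∧ F t ≤ 1) ∧ (∀ t : ℝ, t ≤ 0 → F t = 0)

/-- Membership in `D⁺`: a d.d.f. tending to `1` at `+∞`. -/
def MemDplus (F : ℝ → ℝ) : Prop :=
  IsDDF F ∧ Tendsto F atTop (nhds 1)

/-- **Sehgal–Bharucha-Reid fixed point theorem.** In a complete Menger space under `Min`
with values in `D⁺`, every B-contraction has a unique fixed point `r`, and the iterates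
`f^[n] p` converge to `r` for every `p`. -/
theorem b_contraction_fixed_point
    {S : Type*} [Nonempty S] (Φ : S → S → ℝ → ℝ)
    (hDplus : ∀ p q : S, MemDplus (Φ p q))
    (hPM1 : ∀ p q : S, (∀ t : ℝ, 0 < t → Φ p q t = 1) ↔ p = q)
    (hPM2 : ∀ p q : S, Φ p q = Φ q p)
    (hPM3 : ∀ p q r : S, ∀ s t : ℝ, 0 < s → 0 < t →
      min (Φ p q s) (Φ q r t) ≤ Φ p r (s + t))
    (hComplete : ∀ x : ℕ → S,
      (∀ t : ℝ, 0 < t → ∀ ε : ℝ, 0 < ε → ∃ N : ℕ, ∀ n m : ℕ, N ≤ n → N ≤ m →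
        1 - ε < Φ (x n) (x m) t) →
      ∃ p : S, ∀ t : ℝ, 0 < t → Tendsto (fun n => Φ (x n) p t) atTop (nhds 1))
    (f : S → S) (h : ℝ) (hh : h ∈ Set.Ioo (0 : ℝ) 1)
    (hf : ∀ p q : S, ∀ t : ℝ, 0 < t → Φ p q t ≤ Φ (f p) (f q) (h * t)) :
    ∃ r : S, f r = r ∧ (∀ r' : S, f r' = r' → r' = r) ∧
      ∀ p : S, ∀ t : ℝ, 0 < t →
        Tendsto (fun n => Φ (f^[n] p) r t) atTop (nhds 1) := by
  obtain ⟨h0, h1⟩ := hh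
  have le1 : ∀ p q t, Φ p q t ≤ 1 := fun p q t => ((hDplus p q).1.2.2.1 t).2
  have self1 : ∀ p t, 0 < t → Φ p p t = 1 := fun p => (hPM1 p p).2 rfl
  have iter : ∀ (n : ℕ) (p q : S) (t : ℝ), 0 < t →
      Φ p q (t / h ^ n) ≤ Φ (f^[n] p) (f^[n] q) t := by
    intro n
    induction n with
    | zero => intro p q t ht; simp
    | succ n ih =>
      intro p q t ht
      rw [Function.iterate_succ_apply, Function.iterate_succ_apply]
      refine le_trans ?_ (ih (f p) (f q) t ht)
      have := hf p q (t / h ^ (n + 1)) (by positivity)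
      have e : h * (t / h ^ (n + 1)) = t / h ^ n := by
        field_simp
        ring
      rwa [e] at this
  have lim : ∀ (p q : S) (c : ℝ), 0 < c →
      Tendsto (fun n : ℕ => Φ p q (c / h ^ n)) atTop (nhds 1) := by
    intro p q c hc
    refine (hDplus p q).2.comp ?_
    have := (tendsto_pow_atTop_atTop_of_one_lt ((one_lt_inv₀ h0).2 h1)).const_mul_atTop hc
    refine this.congr fun n => ?_
    rw [inv_pow, div_eq_mul_inv]
  have conv : ∀ (p q : S) (t : ℝ), 0 < t →
      Tendsto (fun n : ℕ => Φ (f^[n] p) (f^[n] q) t) atTop (nhds 1) := fun p q t ht =>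
    tendsto_of_tendsto_of_tendsto_of_le_of_le (lim p q t ht) tendsto_const_nhds
      (fun n => iter n p q t ht) (fun n => le1 _ _ _)
  have orb : ∀ (k : ℕ) (p : S) (t : ℝ), 0 < t → Φ p (f p) ((1 - h) * t) ≤ Φ p (f^[k] p) t := by
    intro k
    induction k with
    | zero => intro p t ht; simp only [Function.iterate_zero, id]; rw [self1 p t ht]; exact le1 _ _ _
    | succ k ih =>
      intro p t ht
      have a := hPM3 p (f p) (f^[k+1] p) ((1 - h) * t) (h * t)
        (mul_pos (by linarith) ht) (by positivity)
      have b := hf p (f^[k] p) t ht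
      rw [← Function.iterate_succ_apply' f k p] at b
      have e : (1 - h) * t + h * t = t := by ring
      rw [e] at a
      exact le_trans (le_min le_rfl ((ih p t ht).trans b)) a
  obtain ⟨p⟩ := ‹Nonempty S›
  obtain ⟨r, hr⟩ := hComplete (fun n => f^[n] p) (by
    intro t ht ε hε
    have L := lim p (f p) ((1 - h) * t) (mul_pos (by linarith) ht)
    obtain ⟨N, hN⟩ := eventually_atTop.1 (L.eventually (lt_mem_nhds (show 1 - ε < 1 by linarith)))
    have key : ∀ n k : ℕ, N ≤ n → 1 - ε < Φ (f^[n] p) (f^[n + k] p) t := by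
      intro n k hn
      rw [Function.iterate_add_apply]
      refine lt_of_lt_of_le (hN n hn) (le_trans ?_ (iter n p (f^[k] p) t ht))
      have := orb k p (t / h ^ n) (by positivity)
      rwa [← mul_div_assoc] at this
    refine ⟨N, fun n m hn hm => ?_⟩
    rcases le_total n m with hl | hl
    · obtain ⟨k, rfl⟩ := Nat.exists_eq_add_of_le hl
      exact key n k hn
    · obtain ⟨k, rfl⟩ := Nat.exists_eq_add_of_le hl
      have := key m k hm
      rwa [hPM2] at this)
  have fix : f r = r := by
    symm
    refine (hPM1 r (f r)).1 fun t ht => le_antisymm (le1 _ _ _) ?_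
    have A := (tendsto_add_atTop_iff_nat 1).2 (hr (t / 2) (by positivity))
    have B := hr (t / 2 / h) (by positivity)
    have C := A.min B
    rw [min_self] at C
    refine le_of_tendsto' C fun n => ?_
    have a := hPM3 r (f^[n+1] p) (f r) (t / 2) (t / 2) (by positivity) (by positivity)
    rw [add_halves, hPM2 r] at a
    have b := hf (f^[n] p) r (t / 2 / h) (by positivity)
    rw [← Function.iterate_succ_apply' f n p, mul_div_cancel₀ _ h0.ne'] at b
    exact le_trans (min_le_min le_rfl b) a
  have conv' : ∀ q : S, ∀ t : ℝ, 0 < t → Tendsto (fun n => Φ (f^[n] q) r t) atTop (nhds 1) := by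
    intro q t ht
    have := conv q r t ht
    simpa only [Function.iterate_fixed fix] using this
  refine ⟨r, fix, fun r' hr' => (hPM1 r' r).1 fun t ht => ?_, conv'⟩
  have := conv' r' t ht
  simp only [Function.iterate_fixed hr'] at this
  exact tendsto_nhds_unique tendsto_const_nhds this
end

section
/- Let (S, Φ) be a complete Menger space under Min whose probabilistic metric takes values in D⁺, let m ≥ 1 be an integer and k ∈ (0,1), and let f : S → S be a probabilistic (m,k)-B-contraction. Then f has a fixed point. -/
open Filter

lemma ultra_pick (u : Ultrafilter ℕ) (P : ℕ → ℕ → Prop) (s : Finset ℕ)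
    (h : ∀ᶠ n in (u : Filter ℕ), ∃ i ∈ s, P n i) :
    ∃ i ∈ s, ∀ᶠ n in (u : Filter ℕ), P n i := by
  by_contra hc
  push Not at hc
  have h2 : ∀ᶠ n in (u : Filter ℕ), ∀ i ∈ s, ¬ P n i := by
    rw [Filter.eventually_all_finset]
    intro i hi
    exact Ultrafilter.eventually_not.2 (by simpa using hc i hi)
  obtain ⟨n, ⟨i, hi, hp⟩, h3⟩ := (h.and h2).exists
  exact h3 i hi hp

/-- A family of pseudometrics version of the generalized contraction theorem. -/
lemma family_fixed {S ι : Type*} [Nonempty S] (d : ι → S → S → ℝ)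
    (d0 : ∀ l p q, 0 ≤ d l p q) (dsymm : ∀ l p q, d l p q = d l q p)
    (dtri : ∀ l p q r, d l p r ≤ d l p q + d l q r)
    (dsep : ∀ p q, (∀ l, d l p q = 0) → p = q)
    (dcomp : ∀ x : ℕ → S, (∀ l, ∀ ε : ℝ, 0 < ε → ∃ N : ℕ, ∀ n m : ℕ, N ≤ n → N ≤ m →
      d l (x n) (x m) < ε) → ∃ p, ∀ l, ∀ ε : ℝ, 0 < ε → ∃ N : ℕ, ∀ n, N ≤ n → d l (x n) p < ε)
    (m : ℕ) (k : ℝ) (k0 : 0 < k) (k1 : k < 1) (f : S → S)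
    (hf : ∀ p q : S, ∃ i : ℕ, 1 ≤ i ∧ i ≤ m ∧
      ∀ l, d l (f^[i] p) (f^[i] q) ≤ k ^ i * d l p q) :
    ∃ r : S, f r = r := by
  have hm : 1 ≤ m := by
    obtain ⟨i, h1, h2, -⟩ := hf (Classical.arbitrary S) (Classical.arbitrary S)
    omega
  -- iterated contraction
  have L1 : ∀ p q : S, ∀ N : ℕ, ∃ n, N ≤ n ∧ n < N + m ∧
      ∀ l, d l (f^[n] p) (f^[n] q) ≤ k ^ n * d l p q := by
    intro p q N
    induction N with
    | zero => exact ⟨0, le_rfl, by omega, fun l => by simp⟩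
    | succ N ih =>
      obtain ⟨n, h1, h2, h3⟩ := ih
      rcases Nat.lt_or_ge N n with h | h
      · exact ⟨n, h, by omega, h3⟩
      · obtain ⟨i, hi1, hi2, hi3⟩ := hf (f^[n] p) (f^[n] q)
        refine ⟨i + n, by omega, by omega, fun l => ?_⟩
        rw [Function.iterate_add_apply, Function.iterate_add_apply]
        refine (hi3 l).trans ?_
        rw [pow_add, mul_assoc]
        exact mul_le_mul_of_nonneg_left (h3 l) (by positivity)
  have kpow1 : ∀ n : ℕ, k ^ n ≤ 1 := fun n => pow_le_one₀ k0.le k1.le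
  obtain ⟨x⟩ := ‹Nonempty S›
  -- boundedness along a syndetic set
  have L2 : ∃ B : ι → ℝ, (∀ l, 0 ≤ B l) ∧ ∀ N : ℕ, ∃ s, N ≤ s ∧ s < N + m ∧
      ∀ l, d l x (f^[s] x) ≤ B l := by
    let D : ι → ℝ := fun l => ∑ i ∈ Finset.range (m + 1), d l x (f^[i] x)
    have hD0 : ∀ l, 0 ≤ D l := fun l => Finset.sum_nonneg fun i _ => d0 _ _ _
    have hD : ∀ l i, i ≤ m → d l x (f^[i] x) ≤ D l := fun l i hi =>
      Finset.single_le_sum (f := fun i => d l x (f^[i] x)) (fun i _ => d0 _ _ _)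
        (Finset.mem_range.2 (by omega))
    have h1k : 0 < 1 - k := by linarith
    have hB0 : ∀ l, 0 ≤ D l / (1 - k) := fun l => div_nonneg (hD0 l) h1k.le
    have hB : ∀ l, D l + k * (D l / (1 - k)) = D l / (1 - k) := fun l => by
      field_simp; ring
    refine ⟨fun l => D l / (1 - k), hB0, fun N => ?_⟩
    induction N with
    | zero =>
      refine ⟨0, le_rfl, by omega, fun l => ?_⟩
      have := hD l 0 (by omega)
      have := hB l
      have := mul_nonneg k0.le (hB0 l)
      linarith
    | succ N ih =>
      obtain ⟨n, h1, h2, h3⟩ := ih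
      rcases Nat.lt_or_ge N n with h | h
      · exact ⟨n, h, by omega, h3⟩
      · obtain ⟨i, hi1, hi2, hi3⟩ := hf x (f^[n] x)
        refine ⟨i + n, by omega, by omega, fun l => ?_⟩
        rw [Function.iterate_add_apply]
        have e1 := dtri l x (f^[i] x) (f^[i] (f^[n] x))
        have e2 := hD l i hi2
        have e3 := hi3 l
        have e4 : k ^ i * d l x (f^[n] x) ≤ k * (D l / (1 - k)) := by
          have : k ^ i ≤ k := by
            calc k ^ i ≤ k ^ 1 := pow_le_pow_of_le_one k0.le k1.le hi1
              _ = k := pow_one k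
          exact mul_le_mul this (h3 l) (d0 _ _ _) k0.le
        have := hB l
        linarith
  obtain ⟨B, hB0, hB⟩ := L2
  let u : Ultrafilter ℕ := Filter.hyperfilter ℕ
  have hu : ∀ N, ∀ᶠ n in (u : Filter ℕ), N ≤ n := fun N =>
    (Nat.hyperfilter_le_atTop) (Filter.eventually_ge_atTop N)
  let Q : ℕ → ℕ → Prop := fun e b => ∀ᶠ n in (u : Filter ℕ), ∀ᶠ n' in (u : Filter ℕ),
    ∀ l, d l (f^[n + e] x) (f^[n' + b + e] x) ≤ k ^ n * B l
  -- every window contains a good b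
  have L3 : ∀ N, ∃ b, N ≤ b ∧ b < N + m ∧ ∃ e ∈ Finset.range m, Q e b := by
    intro N
    have h1 : ∀ᶠ n in (u : Filter ℕ), ∃ b ∈ Finset.Ico N (N + m), ∃ e ∈ Finset.range m,
        ∀ᶠ n' in (u : Filter ℕ), ∀ l, d l (f^[n + e] x) (f^[n' + b + e] x) ≤ k ^ n * B l := by
      refine Filter.Eventually.of_forall fun n => ?_
      refine ultra_pick u (fun n' b => ?_) _ ?_ |>.imp fun b hb => ⟨hb.1, ?_⟩
      · exact ∃ e ∈ Finset.range m, ∀ l, d l (f^[n + e] x) (f^[n' + b + e] x) ≤ k ^ n * B l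
      · filter_upwards [hu n] with n' hn'
        obtain ⟨s, hs1, hs2, hs3⟩ := hB (n' - n + N)
        obtain ⟨t, ht1, ht2, ht3⟩ := L1 x (f^[s] x) n
        refine ⟨s - (n' - n), by rw [Finset.mem_Ico]; omega, t - n,
          by rw [Finset.mem_range]; omega, fun l => ?_⟩
        have e1 : n + (t - n) = t := by omega
        have e2 : n' + (s - (n' - n)) + (t - n) = t + s := by omega
        rw [e1, e2, Function.iterate_add_apply]
        exact (ht3 l).trans (mul_le_mul (pow_le_pow_of_le_one k0.le k1.le ht1) (hs3 l)
          (d0 _ _ _) (by positivity))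
      · exact ultra_pick u _ _ hb.2
    obtain ⟨b, hb, h2⟩ := ultra_pick u _ _ h1
    obtain ⟨e, he, h3⟩ := ultra_pick u _ _ h2
    rw [Finset.mem_Ico] at hb
    exact ⟨b, hb.1, hb.2, e, he, h3⟩
  -- one e with infinitely many b
  have L4 : ∃ e, ∀ N, ∃ b, N ≤ b ∧ Q e b := by
    obtain ⟨e, -, he⟩ := ultra_pick u (fun N e => ∃ b, N ≤ b ∧ Q e b) (Finset.range m)
      (Filter.Eventually.of_forall fun N => by
        obtain ⟨b, h1, -, e, he, h⟩ := L3 N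
        exact ⟨e, he, b, h1, h⟩)
    refine ⟨e, fun N => ?_⟩
    obtain ⟨M, ⟨b, h1, h2⟩, h3⟩ := (he.and (hu N)).exists
    exact ⟨b, h3.trans h1, h2⟩
  obtain ⟨e, he⟩ := L4
  have hinf : {b | Q e b}.Infinite := by
    rw [Set.infinite_iff_exists_gt]
    intro a
    obtain ⟨b, h1, h2⟩ := he (a + 1)
    exact ⟨b, h2, h1⟩
  obtain ⟨C, hC, hCc⟩ := hinf.exists_subset_card_eq (m + 1)
  have hQ : ∀ᶠ n in (u : Filter ℕ), ∀ b ∈ C, ∀ᶠ n' in (u : Filter ℕ),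
      ∀ l, d l (f^[n + e] x) (f^[n' + b + e] x) ≤ k ^ n * B l := by
    rw [Filter.eventually_all_finset]
    intro b hb
    exact hC hb
  have hCne : C.Nonempty := by rw [← Finset.card_pos]; omega
  obtain ⟨b0, hb0⟩ := hCne
  -- the Cauchy sequence
  have hch : ∀ j : ℕ, ∃ n, j ≤ n ∧ ∀ b ∈ C, ∀ᶠ n' in (u : Filter ℕ),
      ∀ l, d l (f^[n + e] x) (f^[n' + b + e] x) ≤ k ^ j * B l := by
    intro j
    obtain ⟨n, h1, h2⟩ := (hQ.and (hu j)).exists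
    refine ⟨n, h2, fun b hb => (h1 b hb).mono fun n' h l => (h l).trans ?_⟩
    exact mul_le_mul_of_nonneg_right (pow_le_pow_of_le_one k0.le k1.le h2) (hB0 l)
  choose ν hν1 hν2 using hch
  have hsmall : ∀ l, ∀ ε : ℝ, 0 < ε → ∃ N : ℕ, ∀ n, N ≤ n → k ^ n * B l < ε := by
    intro l ε hε
    have : Tendsto (fun n : ℕ => k ^ n * B l) atTop (nhds (0 * B l)) :=
      (tendsto_pow_atTop_nhds_zero_of_lt_one k0.le k1).mul_const _
    rw [zero_mul] at this
    exact Filter.eventually_atTop.1 (this.eventually_lt_const hε)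
  obtain ⟨p, hp⟩ := dcomp (fun j => f^[ν j + e] x) (by
    intro l ε hε
    obtain ⟨N, hN⟩ := hsmall l (ε / 2) (by linarith)
    refine ⟨N, fun i j hi hj => ?_⟩
    obtain ⟨n', h1, h2⟩ := ((hν2 i b0 hb0).and (hν2 j b0 hb0)).exists
    have e1 := dtri l (f^[ν i + e] x) (f^[n' + b0 + e] x) (f^[ν j + e] x)
    have e2 := h1 l
    have e3 := h2 l
    rw [dsymm] at e3
    have := hN i hi
    have := hN j hj
    linarith)
  have hlim : ∀ b ∈ C, ∀ l, ∀ ε : ℝ, 0 < ε → ∀ᶠ n in (u : Filter ℕ),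
      d l (f^[n + b + e] x) p < ε := by
    intro b hb l ε hε
    obtain ⟨N, hN⟩ := hsmall l (ε / 2) (by linarith)
    obtain ⟨N', hN'⟩ := hp l (ε / 2) (by linarith)
    filter_upwards [hν2 (max N N') b hb] with n hn
    have e1 := dtri l (f^[n + b + e] x) (f^[ν (max N N') + e] x) p
    have e2 := hn l
    rw [dsymm] at e2
    have := hN _ (le_max_left N N')
    have := hN' _ (le_max_right N N')
    linarith
  -- shadowing times
  obtain ⟨M, hM⟩ : ∃ M, ∀ b ∈ C, b ≤ M := ⟨C.sup id, fun b hb => Finset.le_sup (f := id) hb⟩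
  have L5 : ∀ b ∈ C, ∃ t ∈ Finset.Ico M (M + m), b ≤ t ∧ ∀ᶠ n in (u : Filter ℕ),
      ∀ l, d l (f^[n + t + e] x) (f^[t - b] p) ≤ d l (f^[n + b + e] x) p := by
    intro b hb
    have hbM := hM b hb
    obtain ⟨t, ht, h⟩ := ultra_pick u (fun n t => ∀ l, d l (f^[n + t + e] x) (f^[t - b] p) ≤
      d l (f^[n + b + e] x) p) (Finset.Ico M (M + m)) (Filter.Eventually.of_forall fun n => by
        obtain ⟨i, h1, h2, h3⟩ := L1 (f^[n + b + e] x) p (M - b)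
        refine ⟨i + b, by rw [Finset.mem_Ico]; omega, fun l => ?_⟩
        have e1 : n + (i + b) + e = i + (n + b + e) := by omega
        rw [e1, Nat.add_sub_cancel, Function.iterate_add_apply]
        exact (h3 l).trans (mul_le_of_le_one_left (d0 _ _ _) (kpow1 i)))
    exact ⟨t, ht, by rw [Finset.mem_Ico] at ht; omega, h⟩
  choose! τ hτ1 hτ2 hτ3 using L5
  obtain ⟨b, hb, c, hc, hbc, hτ⟩ := Finset.exists_ne_map_eq_of_card_lt_of_maps_to
    (s := C) (t := Finset.Ico M (M + m)) (f := τ) (by rw [Nat.card_Ico]; omega) hτ1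
  have heq : f^[τ b - b] p = f^[τ b - c] p := by
    refine dsep _ _ fun l => le_antisymm (le_of_forall_pos_le_add fun ε hε => ?_) (d0 _ _ _)
    obtain ⟨n, ⟨h1, h2⟩, h3, h4⟩ := (((hτ3 b hb).and (hτ3 c hc)).and
      ((hlim b hb l (ε / 2) (by linarith)).and (hlim c hc l (ε / 2) (by linarith)))).exists
    have e1 := h1 l
    have e2 := h2 l
    rw [← hτ] at e2
    rw [dsymm] at e1
    have := dtri l (f^[τ b - b] p) (f^[n + τ b + e] x) (f^[τ b - c] p)
    linarith
  -- a periodic point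
  have hper : ∃ y, ∃ L, 0 < L ∧ f^[L] y = y := by
    have key : ∀ i j, i < j → f^[i] p = f^[j] p → ∃ y, ∃ L, 0 < L ∧ f^[L] y = y := by
      intro i j hij h
      refine ⟨f^[i] p, j - i, by omega, ?_⟩
      rw [← Function.iterate_add_apply, Nat.sub_add_cancel hij.le, h]
    have hb2 := hτ2 b hb
    have hc2 := hτ2 c hc
    rcases Nat.lt_or_ge (τ b - b) (τ b - c) with h | h
    · exact key _ _ h heq
    · exact key _ _ (by omega) heq.symm
  obtain ⟨y, L, hL, hy⟩ := hper
  obtain ⟨r, -, hr⟩ := ultra_pick u (fun N r => ∀ l, d l (f^[r] y) (f^[r] (f y)) ≤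
    k ^ N * d l y (f y)) (Finset.range L) (Filter.Eventually.of_forall fun N => by
      obtain ⟨n, h1, -, h3⟩ := L1 y (f y) N
      refine ⟨n % L, Finset.mem_range.2 (Nat.mod_lt _ hL), fun l => ?_⟩
      have p1 : Function.IsPeriodicPt f L y := hy
      have p2 : Function.IsPeriodicPt f L (f y) := p1.apply
      rw [p1.iterate_mod_apply, p2.iterate_mod_apply]
      exact (h3 l).trans (mul_le_mul_of_nonneg_right
        (pow_le_pow_of_le_one k0.le k1.le h1) (d0 _ _ _)))
  refine ⟨f^[r] y, ?_⟩
  rw [← Function.iterate_succ_apply' f r y, Function.iterate_succ_apply]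
  symm
  refine dsep _ _ fun l => le_antisymm ?_ (d0 _ _ _)
  have ht : Tendsto (fun n : ℕ => k ^ n * d l y (f y)) (u : Filter ℕ)
      (nhds (0 * d l y (f y))) :=
    ((tendsto_pow_atTop_nhds_zero_of_lt_one k0.le k1).mul_const _).mono_left
      Nat.hyperfilter_le_atTop
  rw [zero_mul] at ht
  exact ge_of_tendsto ht (hr.mono fun N h => h l)

/-- **Generalized fixed point theorem in Menger spaces.** In a complete Menger space
under `Min` with values in `D⁺`, every probabilistic `(m,k)`-B-contraction has a
fixed point. -/
theorem mk_b_contraction_fixed_point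
    {S : Type*} [Nonempty S] (Φ : S → S → ℝ → ℝ)
    (hDplus : ∀ p q : S, MemDplus (Φ p q))
    (hPM1 : ∀ p q : S, (∀ t : ℝ, 0 < t → Φ p q t = 1) ↔ p = q)
    (hPM2 : ∀ p q : S, Φ p q = Φ q p)
    (hPM3 : ∀ p q r : S, ∀ s t : ℝ, 0 < s → 0 < t →
      min (Φ p q s) (Φ q r t) ≤ Φ p r (s + t))
    (hComplete : ∀ x : ℕ → S,
      (∀ t : ℝ, 0 < t → ∀ ε : ℝ, 0 < ε → ∃ N : ℕ, ∀ n m : ℕ, N ≤ n → N ≤ m →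
        1 - ε < Φ (x n) (x m) t) →
      ∃ p : S, ∀ t : ℝ, 0 < t → Tendsto (fun n => Φ (x n) p t) atTop (nhds 1))
    (m : ℕ) (hm : 1 ≤ m) (k : ℝ) (hk : k ∈ Set.Ioo (0 : ℝ) 1)
    (f : S → S)
    (hf : ∀ p q : S, ∃ i : ℕ, 1 ≤ i ∧ i ≤ m ∧
      ∀ t : ℝ, 0 < t → Φ p q t ≤ Φ (f^[i] p) (f^[i] q) (k ^ i * t)) :
    ∃ r : S, f r = r := by
  have hmono : ∀ p q, Monotone (Φ p q) := fun p q => (hDplus p q).1.1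
  have hle1 : ∀ p q t, Φ p q t ≤ 1 := fun p q t => ((hDplus p q).1.2.2.1 t).2
  let A : Set.Ioi (0 : ℝ) → S → S → Set ℝ := fun l p q => {t | 0 < t ∧ 1 - l.1 < Φ p q t}
  have hne : ∀ l p q, (A l p q).Nonempty := by
    intro l p q
    have h1 : (1 - l.1) < (1 : ℝ) := by have := l.2; simp only [Set.mem_Ioi] at this; linarith
    obtain ⟨t, h2, h3⟩ := (((hDplus p q).2.eventually_const_lt h1).and
      (Filter.eventually_gt_atTop 0)).exists
    exact ⟨t, h3, h2⟩
  have hbdd : ∀ l p q, BddBelow (A l p q) := fun l p q => ⟨0, fun t ht => ht.1.le⟩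
  let d : Set.Ioi (0 : ℝ) → S → S → ℝ := fun l p q => sInf (A l p q)
  have dle : ∀ l p q t, 0 < t → 1 - l.1 < Φ p q t → d l p q ≤ t := fun l p q t h1 h2 =>
    csInf_le (hbdd l p q) ⟨h1, h2⟩
  have dlt : ∀ l p q t, d l p q < t → 1 - l.1 < Φ p q t := by
    intro l p q t h
    obtain ⟨s, hs, hst⟩ := exists_lt_of_csInf_lt (hne l p q) h
    exact hs.2.trans_le (hmono p q hst.le)
  have d0 : ∀ l p q, 0 ≤ d l p q := fun l p q => le_csInf (hne l p q) fun t ht => ht.1.le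
  refine family_fixed d d0 ?_ ?_ ?_ ?_ m k hk.1 hk.2 f ?_
  · intro l p q
    simp only [d, A, hPM2 p q]
  · intro l p q r
    refine le_of_forall_pos_le_add fun ε hε => ?_
    have h1 := dlt l p q (d l p q + ε / 2) (by linarith)
    have h2 := dlt l q r (d l q r + ε / 2) (by linarith)
    have p1 := d0 l p q
    have p2 := d0 l q r
    have h3 := hPM3 p q r (d l p q + ε / 2) (d l q r + ε / 2) (by linarith) (by linarith)
    have h4 := dle l p r _ (by linarith) ((lt_min h1 h2).trans_le h3)
    linarith
  · intro p q h
    rw [← hPM1]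
    intro t ht
    refine le_antisymm (hle1 _ _ _) (le_of_forall_pos_le_add fun ε hε => ?_)
    have := dlt ⟨ε, hε⟩ p q t (by rw [h]; exact ht)
    simp only at this
    linarith
  · intro x hx
    obtain ⟨p, hp⟩ := hComplete x (by
      intro t ht ε hε
      obtain ⟨N, hN⟩ := hx ⟨ε, hε⟩ t ht
      exact ⟨N, fun n m hn hm => dlt ⟨ε, hε⟩ _ _ _ (hN n m hn hm)⟩)
    refine ⟨p, fun l ε hε => ?_⟩
    have h1 : (1 - l.1) < (1 : ℝ) := by have := l.2; simp only [Set.mem_Ioi] at this; linarith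
    obtain ⟨N, hN⟩ := Filter.eventually_atTop.1
      ((hp (ε / 2) (by linarith)).eventually_const_lt h1)
    refine ⟨N, fun n hn => ?_⟩
    have := dle l _ _ _ (by linarith) (hN n hn)
    linarith
  · intro p q
    obtain ⟨i, h1, h2, h3⟩ := hf p q
    refine ⟨i, h1, h2, fun l => ?_⟩
    have hki : 0 < k ^ i := pow_pos hk.1 i
    rw [← div_le_iff₀' hki]
    refine le_csInf (hne l p q) fun t ht => ?_
    rw [div_le_iff₀' hki]
    exact dle l _ _ _ (mul_pos hki ht.1) (ht.2.trans_le (h3 t ht.1))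
end

section
/- Let (S, Φ) be a probabilistic semi-metric space, let m ≥ 1 be an integer and k ∈ (0,1), and let f : S → S be a probabilistic (m,k)-B-contraction. Then for any p, q ∈ S the set I = {i ∈ ℕ : F_{f^i p, f^i q}(t) ≥ F_{p,q}(t / k^i) for all t > 0} is m-syndetic. -/
/-- A set `I ⊆ ℕ` is `m`-syndetic if `I ∩ [n, n + m)` is nonempty for every `n`. -/
def MSyndetic (m : ℕ) (I : Set ℕ) : Prop :=
  ∀ n : ℕ, ∃ i ∈ I, n ≤ i ∧ i < n + m

/-- In a PSM-space, if `f` is a probabilistic `(m,k)`-B-contraction, then for any `p q`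
the set `{i : F_{f^i p, f^i q}(t) ≥ F_{p,q}(t / k^i) for all t > 0}` is `m`-syndetic. -/
theorem mk_b_contraction_syndetic
    {S : Type*} [Nonempty S] (Φ : S → S → ℝ → ℝ)
    (hDDF : ∀ p q : S, IsDDF (Φ p q))
    (hPM1 : ∀ p q : S, (∀ t : ℝ, 0 < t → Φ p q t = 1) ↔ p = q)
    (hPM2 : ∀ p q : S, Φ p q = Φ q p)
    (m : ℕ) (hm : 1 ≤ m) (k : ℝ) (hk : k ∈ Set.Ioo (0 : ℝ) 1)
    (f : S → S)
    (hf : ∀ p q : S, ∃ i : ℕ, 1 ≤ i ∧ i ≤ m ∧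
      ∀ t : ℝ, 0 < t → Φ p q t ≤ Φ (f^[i] p) (f^[i] q) (k ^ i * t))
    (p q : S) :
    MSyndetic m
      {i : ℕ | ∀ t : ℝ, 0 < t → Φ p q (t / k ^ i) ≤ Φ (f^[i] p) (f^[i] q) t} := by
  intro n
  induction n with
  | zero =>
    refine ⟨0, ?_, le_refl 0, by omega⟩
    intro t _
    simp
  | succ n ih =>
    obtain ⟨i, hi, h1, h2⟩ := ih
    by_cases h : n + 1 ≤ i
    · exact ⟨i, hi, h, by omega⟩
    · obtain ⟨j, hj1, hj2, hj⟩ := hf (f^[i] p) (f^[i] q)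
      refine ⟨j + i, ?_, by omega, by omega⟩
      intro t ht
      have hkj : 0 < k ^ j := pow_pos hk.1 j
      have a := hi (t / k ^ j) (div_pos ht hkj)
      have b := hj (t / k ^ j) (div_pos ht hkj)
      rw [mul_div_cancel₀ t hkj.ne'] at b
      rw [div_div, ← pow_add] at a
      rw [Function.iterate_add_apply, Function.iterate_add_apply]
      exact a.trans b
end

section
/- Let (S, Φ) be a Menger space under Min whose probabilistic metric takes values in D⁺, let m ≥ 1 be an integer and k ∈ (0,1), let f : S → S be a probabilistic (m,k)-B-contraction, and let p ∈ S. Then there exists a d.d.f. F ∈ D⁺ such that the set I = {i ∈ ℕ : F_{f^i p, p}(t) ≥ F(t) for all t > 0} is m-syndetic. -/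
open Filter

theorem aux_min {F G : ℝ → ℝ} (hF : MemDplus F) (hG : MemDplus G) :
    MemDplus (fun t => min (F t) (G t)) := by
  obtain ⟨⟨a1, a2, a3, a4⟩, a5⟩ := hF
  obtain ⟨⟨b1, b2, b3, b4⟩, b5⟩ := hG
  refine ⟨⟨a1.min b1, fun t ht => (a2 t ht).min (b2 t ht), fun t => ⟨le_min (a3 t).1 (b3 t).1,
    (min_le_left _ _).trans (a3 t).2⟩, fun t ht => by simp [a4 t ht, b4 t ht]⟩, ?_⟩
  simpa using a5.min b5

theorem aux_scale {F : ℝ → ℝ} (hF : MemDplus F) {c : ℝ} (hc : 0 < c) :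
    MemDplus (fun t => F (c * t)) := by
  obtain ⟨⟨a1, a2, a3, a4⟩, a5⟩ := hF
  refine ⟨⟨fun x y h => a1 (by gcongr), fun t ht => ?_, fun t => a3 _,
    fun t ht => a4 _ (mul_nonpos_of_nonneg_of_nonpos hc.le ht)⟩,
    a5.comp (tendsto_id.const_mul_atTop hc)⟩
  refine ContinuousWithinAt.comp (g := F) (f := fun t => c * t) (t := Set.Iio (c * t))
    (a2 (c * t) (by positivity)) (by fun_prop) ?_
  intro x hx
  exact mul_lt_mul_of_pos_left hx hc

theorem aux_finmin (G : ℕ → ℝ → ℝ) (h : ∀ i, MemDplus (G i)) (m : ℕ) :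
    ∃ F, MemDplus F ∧ ∀ i ≤ m, ∀ t, F t ≤ G i t := by
  induction m with
  | zero => exact ⟨G 0, h 0, fun i hi t => by obtain rfl : i = 0 := by omega
                                              exact le_rfl⟩
  | succ n ih =>
    obtain ⟨F, hF, hl⟩ := ih
    refine ⟨_, aux_min hF (h (n + 1)), fun i hi t => ?_⟩
    rcases Nat.lt_or_ge n i with h1 | h1
    · obtain rfl : i = n + 1 := by omega
      exact min_le_right _ _
    · exact (min_le_left _ _).trans (hl i h1 t)

/-- In a Menger space under `Min` with values in `D⁺`, if `f` is a probabilistic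
`(m,k)`-B-contraction and `p ∈ S`, then there is a d.d.f. `F ∈ D⁺` such that
`{i : F_{f^i p, p}(t) ≥ F(t) for all t > 0}` is `m`-syndetic. -/
theorem mk_b_contraction_syndetic_ddf
    {S : Type*} [Nonempty S] (Φ : S → S → ℝ → ℝ)
    (hDplus : ∀ p q : S, MemDplus (Φ p q))
    (hPM1 : ∀ p q : S, (∀ t : ℝ, 0 < t → Φ p q t = 1) ↔ p = q)
    (hPM2 : ∀ p q : S, Φ p q = Φ q p)
    (hPM3 : ∀ p q r : S, ∀ s t : ℝ, 0 < s → 0 < t →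
      min (Φ p q s) (Φ q r t) ≤ Φ p r (s + t))
    (m : ℕ) (hm : 1 ≤ m) (k : ℝ) (hk : k ∈ Set.Ioo (0 : ℝ) 1)
    (f : S → S)
    (hf : ∀ p q : S, ∃ i : ℕ, 1 ≤ i ∧ i ≤ m ∧
      ∀ t : ℝ, 0 < t → Φ p q t ≤ Φ (f^[i] p) (f^[i] q) (k ^ i * t))
    (p : S) :
    ∃ F : ℝ → ℝ, MemDplus F ∧
      MSyndetic m {i : ℕ | ∀ t : ℝ, 0 < t → F t ≤ Φ (f^[i] p) p t} := by
  obtain ⟨hk0, hk1⟩ := hk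
  obtain ⟨F, hF, hl⟩ := aux_finmin (fun i => Φ (f^[i] p) p) (fun i => hDplus _ _) m
  have hc : 0 < 1 - k := by linarith
  refine ⟨_, aux_scale hF hc, ?_⟩
  have step : ∀ n : ℕ, (∀ t : ℝ, 0 < t → F ((1 - k) * t) ≤ Φ (f^[n] p) p t) →
      ∃ i, 1 ≤ i ∧ i ≤ m ∧ ∀ t : ℝ, 0 < t → F ((1 - k) * t) ≤ Φ (f^[n + i] p) p t := by
    intro n hn
    obtain ⟨i, h1, h2, h3⟩ := hf (f^[n] p) p
    refine ⟨i, h1, h2, fun t ht => ?_⟩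
    have e : f^[n + i] p = f^[i] (f^[n] p) := by rw [add_comm, Function.iterate_add_apply]
    have hki : k ^ i ≤ k := pow_le_of_le_one hk0.le hk1.le (by omega)
    have h4 := hPM3 (f^[i] (f^[n] p)) (f^[i] p) p (k * t) ((1 - k) * t)
      (by positivity) (by positivity)
    rw [show k * t + (1 - k) * t = t by ring] at h4
    rw [e]
    refine le_trans (le_min ?_ (hl i h2 _)) h4
    exact (hn t ht).trans ((h3 t ht).trans ((hDplus _ _).1.1 (by gcongr)))
  intro n
  induction n with
  | zero =>
    refine ⟨0, fun t ht => ?_, le_rfl, by omega⟩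
    have : Φ p p t = 1 := (hPM1 p p).2 rfl t ht
    simp only [Function.iterate_zero, id, this]
    exact (hF.1.2.2.1 _).2
  | succ n ih =>
    obtain ⟨i, hi, h1, h2⟩ := ih
    rcases Nat.lt_or_ge n i with h | h
    · exact ⟨i, hi, h, by omega⟩
    · obtain ⟨j, h3, h4, h5⟩ := step i hi
      exact ⟨i + j, h5, by omega, by omega⟩
end

section
/- Let m ≥ 1 be an integer and let R ⊆ ℕ × ℕ be a relation such that (i) the set {i ∈ ℕ : (i, 0) ∈ R} is m-syndetic, and (ii) whenever (i, j) ∈ R, the set {k ∈ ℕ : (i+k, j+k) ∈ R} is m-syndetic. Then there exists a set I ⊆ ℕ with upper Banach density d*(I) ≥ 1/(2m²) such that for every i, j ∈ I there exists k ∈ ℕ with (k, i) ∈ R and (k, j) ∈ R. -/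
/-- The upper Banach density of a set `I ⊆ ℕ`:
`d*(I) = inf_{m ≥ 1} sup_{k ∈ ℕ} |I ∩ [k, k+m)| / m`. -/
noncomputable def upperBanachDensity (I : Set ℕ) : ℝ :=
  ⨅ m : {m : ℕ // 1 ≤ m}, ⨆ k : ℕ, ((I ∩ Set.Ico k (k + m.1)).ncard : ℝ) / (m.1 : ℝ)

open Filter in
/-- `E` has relative counting at least `ε` along the ultrafilter. -/
def AFD (ε : ℝ) (E : Set ℕ) : Prop :=
  ∀ᶠ K : ℕ in (hyperfilter ℕ : Filter ℕ), ε * K ≤ ((E ∩ Set.Ico 0 K).ncard : ℝ)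

open Filter in
/-- Persistent positivity. -/
def AFP (S : ℕ → Set ℕ) (E : Set ℕ) : Prop :=
  ∃ ε : ℝ, 0 < ε ∧ ∀ᶠ n : ℕ in (hyperfilter ℕ : Filter ℕ), AFD ε (E ∩ S n)

lemma af_fin (E : Set ℕ) (K : ℕ) : (E ∩ Set.Ico 0 K).Finite :=
  (Set.finite_Ico 0 K).subset Set.inter_subset_right

lemma af_atTop {p : ℕ → Prop} (h : ∀ᶠ n in Filter.atTop, p n) :
    ∀ᶠ n in (Filter.hyperfilter ℕ : Filter ℕ), p n :=
  Nat.hyperfilter_le_atTop h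

lemma afP_nonempty {S : ℕ → Set ℕ} {E : Set ℕ} (h : AFP S E) : E.Nonempty := by
  obtain ⟨ε, hε, h⟩ := h
  obtain ⟨n, hn⟩ := h.exists
  obtain ⟨K, hK, hK1⟩ := (hn.and (af_atTop (Filter.eventually_ge_atTop 1))).exists
  by_contra hE
  rw [Set.not_nonempty_iff_eq_empty] at hE
  subst hE
  simp at hK
  have : (1:ℝ) ≤ K := by exact_mod_cast hK1
  nlinarith

lemma afP_union {S : ℕ → Set ℕ} {A B : Set ℕ} (hA : ¬ AFP S A) (hB : ¬ AFP S B) :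
    ¬ AFP S (A ∪ B) := by
  rintro ⟨ε, hε, h⟩
  unfold AFP at hA hB
  push Not at hA hB
  have h1 := hA (ε/2) (by positivity)
  have h2 := hB (ε/2) (by positivity)
  obtain ⟨n, hn, h1, h2⟩ := (h.and (h1.and h2)).exists
  have h1' := Ultrafilter.eventually_not.2 h1
  have h2' := Ultrafilter.eventually_not.2 h2
  obtain ⟨K, hK, k1, k2⟩ := (hn.and (h1'.and h2')).exists
  have : ((A ∪ B) ∩ S n ∩ Set.Ico 0 K).ncard ≤
      (A ∩ S n ∩ Set.Ico 0 K).ncard + (B ∩ S n ∩ Set.Ico 0 K).ncard := by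
    rw [Set.union_inter_distrib_right, Set.union_inter_distrib_right]
    exact Set.ncard_union_le _ _
  have : (((A ∪ B) ∩ S n ∩ Set.Ico 0 K).ncard : ℝ) ≤
      (A ∩ S n ∩ Set.Ico 0 K).ncard + (B ∩ S n ∩ Set.Ico 0 K).ncard := by exact_mod_cast this
  linarith

lemma afP_step {S : ℕ → Set ℕ} {E : Set ℕ} (h : AFP S E) (N : ℕ) :
    ∃ n, N ≤ n ∧ AFP S (E ∩ S n) := by
  by_contra hcon
  push Not at hcon
  obtain ⟨ε, hε, h⟩ := h
  have key : ∀ r : ℕ, ∃ B : Set ℕ, ¬ AFP S B ∧ AFD (r * (ε/2)) B := by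
    intro r
    induction r with
    | zero =>
      refine ⟨∅, fun hh => by simpa using afP_nonempty hh, ?_⟩
      exact Filter.Eventually.of_forall fun K => by simp
    | succ r ih =>
      obtain ⟨B, hB, hD⟩ := ih
      have hB' := hB
      unfold AFP at hB'
      push Not at hB'
      have h1 := hB' (ε/2) (by positivity)
      obtain ⟨n, hn, h1, h2⟩ :=
        (h.and (h1.and (af_atTop (Filter.eventually_ge_atTop N)))).exists
      refine ⟨B ∪ (E ∩ S n), afP_union hB (hcon n h2), ?_⟩
      have h1' := Ultrafilter.eventually_not.2 h1
      filter_upwards [hD, hn, h1'] with K k1 k2 k3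
      have e1 := Set.ncard_union_add_ncard_inter (B ∩ Set.Ico 0 K) (E ∩ S n ∩ Set.Ico 0 K)
        (af_fin _ _) (af_fin _ _)
      rw [← Set.union_inter_distrib_right] at e1
      have e2 : (B ∩ Set.Ico 0 K ∩ (E ∩ S n ∩ Set.Ico 0 K)).ncard ≤
          (B ∩ S n ∩ Set.Ico 0 K).ncard :=
        Set.ncard_le_ncard (fun x hx => ⟨⟨hx.1.1, hx.2.1.2⟩, hx.1.2⟩) (af_fin _ _)
      have e1' : (((B ∪ E ∩ S n) ∩ Set.Ico 0 K).ncard : ℝ) +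
        (B ∩ Set.Ico 0 K ∩ (E ∩ S n ∩ Set.Ico 0 K)).ncard =
        (B ∩ Set.Ico 0 K).ncard + (E ∩ S n ∩ Set.Ico 0 K).ncard := by exact_mod_cast e1
      have e2' : ((B ∩ Set.Ico 0 K ∩ (E ∩ S n ∩ Set.Ico 0 K)).ncard : ℝ) ≤
          (B ∩ S n ∩ Set.Ico 0 K).ncard := by exact_mod_cast e2
      push_cast
      linarith
  obtain ⟨r, hr⟩ := exists_nat_gt (2/ε)
  obtain ⟨B, -, hB⟩ := key r
  obtain ⟨K, hK, hK1⟩ := (hB.and (af_atTop (Filter.eventually_ge_atTop 1))).exists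
  have h1 : (B ∩ Set.Ico 0 K).ncard ≤ K := by
    have := Set.ncard_le_ncard (Set.inter_subset_right : B ∩ Set.Ico 0 K ⊆ _)
      (Set.finite_Ico 0 K)
    simpa using this
  have h1' : ((B ∩ Set.Ico 0 K).ncard : ℝ) ≤ K := by exact_mod_cast h1
  have h2 : (1:ℝ) ≤ K := by exact_mod_cast hK1
  have h3 : 1 < r * (ε/2) := by
    rw [div_lt_iff₀ hε] at hr
    linarith
  nlinarith

lemma af_count (m : ℕ) (hm : 1 ≤ m) (R : Set (ℕ × ℕ))
    (h0 : MSyndetic m {i : ℕ | (i, 0) ∈ R})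
    (hshift : ∀ i j : ℕ, (i, j) ∈ R → MSyndetic m {k : ℕ | (i + k, j + k) ∈ R})
    (p q K : ℕ) (hK : m * p + m * q ≤ K) :
    p * q ≤ ∑ k ∈ Finset.range K, ({j | (k, j) ∈ R} ∩ Set.Ico 0 (m * q)).ncard := by
  classical
  choose d hd hd1 hd2 using fun a : ℕ => h0 (m * a)
  have hs : ∀ a b : ℕ, ∃ j, (d a + j, j) ∈ R ∧ m * b ≤ j ∧ j < m * b + m := by
    intro a b
    obtain ⟨j, hj, h1, h2⟩ := hshift (d a) 0 (hd a) (m * b)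
    exact ⟨j, by simpa using hj, h1, h2⟩
  choose f hf hf1 hf2 using hs
  have hdiv : ∀ a x, m * a ≤ x → x < m * a + m → x / m = a := by
    intro a x h1 h2
    rw [Nat.div_eq_iff (by omega)]
    constructor
    · rw [mul_comm]; exact h1
    · rw [mul_comm a m]; omega
  have hlt : ∀ a p x, a < p → x < m * a + m → x < m * p := by
    intro a p x h1 h2
    have : m * (a + 1) ≤ m * p := Nat.mul_le_mul_left m h1
    rw [mul_add] at this
    omega
  have e : ∀ k, ({j | (k, j) ∈ R} ∩ Set.Ico 0 (m * q)).ncard =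
      ((Finset.range (m * q)).filter (fun j => (k, j) ∈ R)).card := by
    intro k
    rw [← Set.ncard_coe_finset]
    congr 1
    ext j
    simp [and_comm]
  simp_rw [e]
  rw [← Finset.card_sigma, ← Finset.card_range p, ← Finset.card_range q, ← Finset.card_product]
  simp only [Finset.card_range]
  apply Finset.card_le_card_of_injOn (fun x => (⟨d x.1 + f x.1 x.2, f x.1 x.2⟩ : Σ _ : ℕ, ℕ))
  · rintro ⟨a, b⟩ hab
    simp only [Finset.coe_product, Set.mem_prod, Finset.mem_coe, Finset.mem_range] at hab
    have h1 := hlt a p (d a) hab.1 (hd2 a)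
    have h2 := hlt b q (f a b) hab.2 (hf2 a b)
    simp only [Finset.coe_sigma, Finset.mem_coe, Set.mem_sigma_iff, Finset.mem_range,
      Finset.mem_filter]
    exact ⟨by omega, h2, hf a b⟩
  · rintro ⟨a, b⟩ - ⟨a', b'⟩ - h
    simp only [Sigma.mk.injEq, heq_eq_eq] at h
    obtain ⟨h1, h2⟩ := h
    have h3 : d a = d a' := by omega
    have ha := hdiv a _ (hd1 a) (hd2 a)
    have ha' := hdiv a' _ (hd1 a') (hd2 a')
    have hb := hdiv b _ (hf1 a b) (hf2 a b)
    have hb' := hdiv b' _ (hf1 a' b') (hf2 a' b')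
    rw [Prod.mk.injEq]
    constructor
    · rw [← ha, ← ha', h3]
    · rw [← hb, ← hb', h2]

lemma af_markov (m : ℕ) (hm : 1 ≤ m) (R : Set (ℕ × ℕ))
    (h0 : MSyndetic m {i : ℕ | (i, 0) ∈ R})
    (hshift : ∀ i j : ℕ, (i, j) ∈ R → MSyndetic m {k : ℕ | (i + k, j + k) ∈ R})
    (q : ℕ) (hq : 1 ≤ q) :
    AFD (1 / (4 * (m:ℝ)^2)) {k | 1 / (2 * (m:ℝ)^2) * ((m * q : ℕ) : ℝ) ≤
      ({j | (k, j) ∈ R} ∩ Set.Ico 0 (m * q)).ncard} := by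
  classical
  apply af_atTop
  set N := m * q with hN
  set c : ℝ := 1 / (2 * (m:ℝ)^2) with hc
  set E : Set ℕ := {k | c * (N : ℝ) ≤ ({j | (k, j) ∈ R} ∩ Set.Ico 0 N).ncard} with hE
  filter_upwards [Filter.eventually_ge_atTop (4 * (N + m))] with K hK
  have hm0 : (0:ℝ) < m := by exact_mod_cast hm
  have hq0 : (0:ℝ) < q := by exact_mod_cast hq
  set p := (K - N) / m with hp
  have hp1 : m * p ≤ K - N := Nat.mul_div_le _ _
  have hp2 : K - N < m * p + m := by
    have := Nat.lt_mul_div_succ (K - N) (show 0 < m by omega)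
    rw [mul_add, mul_one] at this
    exact this
  have h1 := af_count m hm R h0 hshift p q K (by omega)
  have h1' : (p:ℝ) * q ≤
      ∑ k ∈ Finset.range K, (({j | (k, j) ∈ R} ∩ Set.Ico 0 N).ncard : ℝ) := by
    exact_mod_cast h1
  have hcN : 0 ≤ c * N := by positivity
  have h2 : ∑ k ∈ Finset.range K, (({j | (k, j) ∈ R} ∩ Set.Ico 0 N).ncard : ℝ) ≤
      ∑ k ∈ Finset.range K, ((N:ℝ) * (if k ∈ E then 1 else 0) + c * N) := by
    apply Finset.sum_le_sum
    intro k _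
    have hle : ({j | (k, j) ∈ R} ∩ Set.Ico 0 N).ncard ≤ N := by
      have := Set.ncard_le_ncard (Set.inter_subset_right : {j | (k, j) ∈ R} ∩ Set.Ico 0 N ⊆ _)
        (Set.finite_Ico 0 N)
      simpa using this
    have hle' : (({j | (k, j) ∈ R} ∩ Set.Ico 0 N).ncard : ℝ) ≤ N := by exact_mod_cast hle
    split_ifs with hk
    · linarith
    · have : ¬ (c * (N : ℝ) ≤ ({j | (k, j) ∈ R} ∩ Set.Ico 0 N).ncard) := hk
      linarith
  have e : ((E ∩ Set.Ico 0 K).ncard : ℝ) = ∑ k ∈ Finset.range K, (if k ∈ E then (1:ℝ) else 0) := by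
    rw [Finset.sum_boole, ← Set.ncard_coe_finset]
    congr 2
    ext j
    simp [and_comm]
  rw [Finset.sum_add_distrib, ← Finset.mul_sum, ← e, Finset.sum_const, Finset.card_range,
    nsmul_eq_mul] at h2
  set x : ℝ := ((E ∩ Set.Ico 0 K).ncard : ℝ)
  have hNr : (N:ℝ) = m * q := by rw [hN]; push_cast; ring
  have hp2' : (K:ℝ) < m * p + m + N := by
    have : K < m * p + m + N := by omega
    exact_mod_cast this
  have hKr : 4 * ((N:ℝ) + m) ≤ K := by exact_mod_cast hK
  -- p ≤ m x + K / (2 m)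
  have h3 : (p:ℝ) * q ≤ (m * x + m * c * K) * q := by
    calc (p:ℝ) * q ≤ _ := h1'.trans h2
      _ = _ := by rw [hNr]; ring
  have h4 := le_of_mul_le_mul_right h3 hq0
  have h5 : (m:ℝ)^2 * c = 1/2 := by rw [hc]; field_simp
  have h6 : (m:ℝ) * p ≤ m^2 * x + K / 2 := by
    calc (m:ℝ) * p ≤ m * (m * x + m * c * K) := by gcongr
      _ = m^2 * x + (m^2*c) * K := by ring
      _ = _ := by rw [h5]; ring
  rw [div_mul_eq_mul_div, div_le_iff₀ (by positivity)]
  nlinarith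

lemma af_density (A : Set ℕ) (c : ℝ) (m : ℕ) (hm : 1 ≤ m)
    (h : ∀ M : ℕ, ∃ n, M ≤ n ∧
      c * ((m * n.factorial : ℕ) : ℝ) ≤ (A ∩ Set.Ico 0 (m * n.factorial)).ncard) :
    c ≤ upperBanachDensity A := by
  unfold upperBanachDensity
  haveI : Nonempty {m : ℕ // 1 ≤ m} := ⟨⟨1, le_rfl⟩⟩
  apply le_ciInf
  rintro ⟨M, hM⟩
  simp only
  have hM0 : (0:ℝ) < M := by exact_mod_cast hM
  have hb : BddAbove (Set.range fun k : ℕ => ((A ∩ Set.Ico k (k + M)).ncard : ℝ) / (M:ℝ)) := by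
    refine ⟨1, ?_⟩
    rintro _ ⟨k, rfl⟩
    simp only
    rw [div_le_one hM0]
    have := Set.ncard_le_ncard (Set.inter_subset_right : A ∩ Set.Ico k (k + M) ⊆ _)
      (Set.finite_Ico _ _)
    have h2 : (A ∩ Set.Ico k (k + M)).ncard ≤ M := by simpa using this
    exact_mod_cast h2
  set s : ℝ := ⨆ k : ℕ, ((A ∩ Set.Ico k (k + M)).ncard : ℝ) / (M:ℝ)
  have hs : ∀ k, ((A ∩ Set.Ico k (k + M)).ncard : ℝ) ≤ s * M := fun k => by
    rw [← div_le_iff₀ hM0]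
    exact le_ciSup hb k
  have hind : ∀ t : ℕ, ((A ∩ Set.Ico 0 (M * t)).ncard : ℝ) ≤ s * (M * t) := by
    intro t
    induction t with
    | zero => simp
    | succ t ih =>
      have h1 : (A ∩ Set.Ico 0 (M * (t + 1))).ncard ≤
          (A ∩ Set.Ico 0 (M * t)).ncard + (A ∩ Set.Ico (M * t) (M * t + M)).ncard := by
        have : Set.Ico 0 (M * (t+1)) = Set.Ico 0 (M * t) ∪ Set.Ico (M * t) (M * t + M) := by
          rw [Set.Ico_union_Ico_eq_Ico (by omega) (by omega)]
          rfl
        rw [this, Set.inter_union_distrib_left]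
        exact Set.ncard_union_le _ _
      have h1' : ((A ∩ Set.Ico 0 (M * (t + 1))).ncard : ℝ) ≤
          (A ∩ Set.Ico 0 (M * t)).ncard + (A ∩ Set.Ico (M * t) (M * t + M)).ncard := by
        exact_mod_cast h1
      have := hs (M * t)
      push_cast
      linarith
  obtain ⟨n, hn, hc⟩ := h M
  obtain ⟨t, ht⟩ : M ∣ m * n.factorial :=
    Dvd.dvd.mul_left (Nat.dvd_factorial (by omega) hn) m
  have hpos : 0 < m * n.factorial := Nat.mul_pos (by omega) n.factorial_pos
  have h1 := hind t
  rw [← ht] at h1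
  have h2 : ((M:ℝ) * t) = ((m * n.factorial : ℕ) : ℝ) := by rw [ht]; push_cast; ring
  rw [h2] at h1
  have h3 : (0:ℝ) < ((m * n.factorial : ℕ) : ℝ) := by exact_mod_cast hpos
  exact le_of_mul_le_mul_right (hc.trans h1) h3

/-- **Arvanitakis/Fremlin combinatorial lemma.** If `{i : (i,0) ∈ R}` is `m`-syndetic
and `{k : (i+k, j+k) ∈ R}` is `m`-syndetic whenever `(i,j) ∈ R`, then there is a set
`I` of upper Banach density at least `1/(2m²)` such that any two elements of `I` have
a common `R`-predecessor. -/
theorem arvanitakis_fremlin_lemma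
    (m : ℕ) (hm : 1 ≤ m) (R : Set (ℕ × ℕ))
    (h0 : MSyndetic m {i : ℕ | (i, 0) ∈ R})
    (hshift : ∀ i j : ℕ, (i, j) ∈ R → MSyndetic m {k : ℕ | (i + k, j + k) ∈ R}) :
    ∃ I : Set ℕ, 1 / (2 * (m : ℝ) ^ 2) ≤ upperBanachDensity I ∧
      ∀ i ∈ I, ∀ j ∈ I, ∃ k : ℕ, (k, i) ∈ R ∧ (k, j) ∈ R := by
  classical
  have hm0 : (0:ℝ) < m := by exact_mod_cast hm
  set S : ℕ → Set ℕ := fun n => {k | 1 / (2 * (m:ℝ)^2) * ((m * n.factorial : ℕ) : ℝ) ≤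
      ({j | (k, j) ∈ R} ∩ Set.Ico 0 (m * n.factorial)).ncard} with hS
  have hP0 : AFP S Set.univ := by
    refine ⟨1 / (4 * (m:ℝ)^2), by positivity, Filter.Eventually.of_forall fun n => ?_⟩
    rw [Set.univ_inter]
    exact af_markov m hm R h0 hshift n.factorial n.factorial_pos
  choose g hg1 hg2 using fun (F : {F : Set ℕ // AFP S F}) (N : ℕ) => afP_step F.2 N
  let F : ℕ → {F : Set ℕ // AFP S F} := fun r =>
    Nat.rec ⟨Set.univ, hP0⟩ (fun r F => ⟨F.1 ∩ S (g F r), hg2 F r⟩) r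
  have hF : ∀ r, (F (r+1)).1 = (F r).1 ∩ S (g (F r) r) := fun r => rfl
  have hanti : Antitone fun r => (F r).1 :=
    antitone_nat_of_succ_le fun r => by rw [hF]; exact Set.inter_subset_left
  choose k hk using fun r => afP_nonempty (F r).2
  let A : Set ℕ := {j | ∀ᶠ r in (Filter.hyperfilter ℕ : Filter ℕ), (k r, j) ∈ R}
  refine ⟨A, ?_, ?_⟩
  · apply af_density A _ m hm
    intro M
    refine ⟨g (F M) M, hg1 _ _, ?_⟩
    set N := m * (g (F M) M).factorial with hN
    have hag : ∀ᶠ r in (Filter.hyperfilter ℕ : Filter ℕ),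
        ∀ j ∈ Set.Ico 0 N, ((k r, j) ∈ R → j ∈ A) := by
      rw [Filter.eventually_all_finite (Set.finite_Ico 0 N)]
      intro j _
      by_cases hj : j ∈ A
      · exact Filter.Eventually.of_forall fun _ _ => hj
      · have : ∀ᶠ r in (Filter.hyperfilter ℕ : Filter ℕ), ¬ (k r, j) ∈ R :=
          Ultrafilter.eventually_not.2 hj
        filter_upwards [this] with r hr h
        exact absurd h hr
    obtain ⟨r, hr, hrM⟩ := (hag.and (af_atTop (Filter.eventually_ge_atTop (M+1)))).exists
    have h1 : k r ∈ S (g (F M) M) := by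
      have : k r ∈ (F (M+1)).1 := hanti hrM (hk r)
      rw [hF] at this
      exact this.2
    have h2 : ({j | (k r, j) ∈ R} ∩ Set.Ico 0 N).ncard ≤ (A ∩ Set.Ico 0 N).ncard :=
      Set.ncard_le_ncard (fun j hj => ⟨hr j hj.2 hj.1, hj.2⟩) (af_fin _ _)
    have h3 : 1 / (2 * (m:ℝ)^2) * (N : ℝ) ≤ ({j | (k r, j) ∈ R} ∩ Set.Ico 0 N).ncard := h1
    exact h3.trans (by exact_mod_cast h2)
  · intro i hi j hj
    obtain ⟨r, h1, h2⟩ := (Filter.Eventually.and hi hj).exists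
    exact ⟨k r, h1, h2⟩
end

section
/- Let m ≥ 1 be an integer and let R ⊆ ℕ × ℕ be a relation such that (i) the set {i ∈ ℕ : (i, 0) ∈ R} is m-syndetic, and (ii) whenever (i, j) ∈ R, the set {k ∈ ℕ : (i+k, j+k) ∈ R} is m-syndetic. Then for all natural numbers k ≤ l there exist i ∈ [l, l+2m) and j ∈ [k, k+m) with (i, j) ∈ R. -/
/-- If `{i : (i,0) ∈ R}` is `m`-syndetic and `{k : (i+k, j+k) ∈ R}` is `m`-syndetic
whenever `(i,j) ∈ R`, then `R` meets `[l, l+2m) × [k, k+m)` whenever `k ≤ l`. -/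
theorem relation_meets_rectangle
    (m : ℕ) (hm : 1 ≤ m) (R : Set (ℕ × ℕ))
    (h0 : MSyndetic m {i : ℕ | (i, 0) ∈ R})
    (hshift : ∀ i j : ℕ, (i, j) ∈ R → MSyndetic m {k : ℕ | (i + k, j + k) ∈ R}) :
    ∀ k l : ℕ, k ≤ l →
      ∃ i : ℕ, l ≤ i ∧ i < l + 2 * m ∧
        ∃ j : ℕ, k ≤ j ∧ j < k + m ∧ (i, j) ∈ R := by
  intro k l hkl
  obtain ⟨i, hi, h1, h2⟩ := h0 (l - k)
  obtain ⟨t, ht, h3, h4⟩ := hshift i 0 hi k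
  simp only [Set.mem_setOf_eq, Nat.zero_add] at ht
  exact ⟨i + t, by omega, by omega, t, h3, h4, ht⟩
end

section
/- Let (S, Φ) be a Menger space under Min whose probabilistic metric takes values in D⁺, let m ≥ 1 be an integer and k ∈ (0,1), let f : S → S be a probabilistic (m,k)-B-contraction, and let p ∈ S. Then there exists a set I ⊆ ℕ with upper Banach density d*(I) > 0 such that the family (f^i p)_{i ∈ I} is Cauchy: for every t > 0 and ε > 0 there exists N ∈ ℕ such that F_{f^i p, f^j p}(t) > 1 − ε for all i, j ∈ I with i, j ≥ N. -/
open Filter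

open Classical in
noncomputable def mkbCnt (A : Set ℕ) (n : ℕ) : ℕ := ((Finset.range n).filter (· ∈ A)).card

theorem mkb_synd (P : ℕ → Prop) (m : ℕ) (h0 : P 0)
    (hs : ∀ a, P a → ∃ s, 1 ≤ s ∧ s ≤ m ∧ P (a + s)) (hm : 1 ≤ m) (N : ℕ) :
    ∃ a, N ≤ a ∧ a < N + m ∧ P a := by
  induction N with
  | zero => exact ⟨0, le_rfl, by omega, h0⟩
  | succ N ih =>
    obtain ⟨a, h1, h2, h3⟩ := ih
    by_cases h : N + 1 ≤ a
    · exact ⟨a, h, by omega, h3⟩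
    · obtain ⟨s, hs1, hs2, hs3⟩ := hs a h3
      exact ⟨a + s, by omega, by omega, hs3⟩

theorem mkb_cnt_synd (B : Set ℕ) (m : ℕ) (hB : ∀ N, ∃ a, N ≤ a ∧ a < N + m ∧ a ∈ B) (q : ℕ) :
    q ≤ mkbCnt B (m * q) := by
  classical
  induction q with
  | zero => simp
  | succ q ih =>
    obtain ⟨a, h1, h2, h3⟩ := hB (m * q)
    unfold mkbCnt at *
    have hsub : insert a ((Finset.range (m * q)).filter (· ∈ B)) ⊆
        (Finset.range (m * (q + 1))).filter (· ∈ B) := by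
      intro x hx
      simp only [Finset.mem_insert, Finset.mem_filter, Finset.mem_range] at hx ⊢
      rw [mul_add, mul_one]
      rcases hx with rfl | ⟨hx, hx'⟩
      · exact ⟨h2, h3⟩
      · exact ⟨by omega, hx'⟩
    have := Finset.card_le_card hsub
    rw [Finset.card_insert_of_notMem (by simp; omega)] at this
    exact (Nat.succ_le_succ ih).trans this

theorem mkb_density (I : Set ℕ) (m : ℕ) (hm : 1 ≤ m)
    (hI : ∀ M, ∃ q, M ≤ q ∧ q ≤ m * mkbCnt I (2 * m * q)) : 0 < upperBanachDensity I := by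
  classical
  have hmR : (1 : ℝ) ≤ m := by exact_mod_cast hm
  have hpos : (0 : ℝ) < 1 / (3 * m ^ 2) := by positivity
  refine lt_of_lt_of_le hpos ?_
  haveI : Nonempty {m : ℕ // 1 ≤ m} := ⟨⟨1, le_rfl⟩⟩
  refine le_ciInf ?_
  rintro ⟨M, hM⟩
  simp only
  have hMR : (1 : ℝ) ≤ M := by exact_mod_cast hM
  have hcard : ∀ k, (I ∩ Set.Ico k (k + M)).ncard ≤ M := by
    intro k
    calc (I ∩ Set.Ico k (k + M)).ncard ≤ (Set.Ico k (k + M)).ncard :=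
          Set.ncard_le_ncard Set.inter_subset_right (Set.finite_Ico _ _)
      _ = M := by
          rw [← Finset.coe_Ico, Set.ncard_coe_finset]; simp
  have hbdd : BddAbove (Set.range fun k : ℕ => ((I ∩ Set.Ico k (k + M)).ncard : ℝ) / (M : ℝ)) := by
    refine ⟨1, ?_⟩
    rintro _ ⟨k, rfl⟩
    simp only
    rw [div_le_one (by linarith)]
    exact_mod_cast hcard k
  set s := ⨆ k : ℕ, ((I ∩ Set.Ico k (k + M)).ncard : ℝ) / (M : ℝ) with hs
  have hle : ∀ k, ((I ∩ Set.Ico k (k + M)).ncard : ℝ) ≤ s * M := by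
    intro k
    have := le_ciSup hbdd k
    rwa [div_le_iff₀ (by linarith)] at this
  have hs0 : 0 ≤ s := by
    have h1 := hle 0
    by_contra h
    have h2 : (0 : ℝ) ≤ ((I ∩ Set.Ico 0 (0 + M)).ncard : ℝ) := by positivity
    nlinarith
  have hw : ∀ w : ℕ, (mkbCnt I (M * w) : ℝ) ≤ w * (s * M) := by
    intro w
    induction w with
    | zero => simp [mkbCnt]
    | succ w ih =>
      have : mkbCnt I (M * (w + 1)) ≤ mkbCnt I (M * w) + (I ∩ Set.Ico (M * w) (M * w + M)).ncard := by
        unfold mkbCnt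
        have e : I ∩ Set.Ico (M * w) (M * w + M) =
          (((Finset.Ico (M * w) (M * w + M)).filter (· ∈ I) : Finset ℕ) : Set ℕ) := by
          ext x; simp [and_comm]
        rw [e, Set.ncard_coe_finset]
        refine le_trans (Finset.card_le_card ?_) (Finset.card_union_le _ _)
        intro x hx
        simp only [Finset.mem_union, Finset.mem_filter, Finset.mem_range, Finset.mem_Ico] at hx ⊢
        rw [mul_add, mul_one] at hx
        rcases lt_or_ge x (M * w) with h | h
        · exact Or.inl ⟨h, hx.2⟩
        · exact Or.inr ⟨⟨h, hx.1⟩, hx.2⟩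
      have h2 := hle (M * w)
      have h3 : (mkbCnt I (M * (w + 1)) : ℝ) ≤
        mkbCnt I (M * w) + ((I ∩ Set.Ico (M * w) (M * w + M)).ncard : ℝ) := by exact_mod_cast this
      push_cast
      linarith
  obtain ⟨q, hq1, hq2⟩ := hI M
  set w := 2 * m * q / M + 1 with hwdef
  have hw1 : 2 * m * q ≤ M * w := by
    have := Nat.lt_mul_div_succ (2 * m * q) (by omega : 0 < M)
    exact this.le
  have hw2 : M * w ≤ 3 * m * q := by
    have h1 := Nat.mul_div_le (2 * m * q) M
    have h2 : M ≤ m * q := by nlinarith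
    rw [hwdef, mul_add, mul_one]
    nlinarith
  have hmono : mkbCnt I (2 * m * q) ≤ mkbCnt I (M * w) := by
    unfold mkbCnt
    apply Finset.card_le_card
    intro x hx
    simp only [Finset.mem_filter, Finset.mem_range] at hx ⊢
    exact ⟨by omega, hx.2⟩
  have hq3 : (q : ℝ) ≤ m * mkbCnt I (M * w) := by
    exact_mod_cast hq2.trans (Nat.mul_le_mul_left m hmono)
  have hq4 : (M : ℝ) * w ≤ 3 * m * q := by exact_mod_cast hw2
  have hqpos : (0 : ℝ) < q := by
    have : 0 < q := by omega
    exact_mod_cast this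
  have h5 : (q : ℝ) ≤ (3 * m ^ 2 * s) * q := by
    calc (q : ℝ) ≤ m * mkbCnt I (M * w) := hq3
      _ ≤ m * (w * (s * M)) := by gcongr; exact hw w
      _ = m * s * (M * w) := by ring
      _ ≤ m * s * (3 * m * q) := by gcongr
      _ = _ := by ring
  have h6 : 1 ≤ 3 * (m : ℝ) ^ 2 * s := by
    by_contra h
    push Not at h
    nlinarith
  rw [div_le_iff₀ (by positivity)]
  linarith

/-- Combinatorial core: pick a chain of consecutive-intersecting sets of uniform density. -/
theorem mkb_chain (S : ℕ → Set ℕ) (m : ℕ) (hm : 1 ≤ m) (B : Set ℕ)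
    (hB : ∀ N, ∃ a, N ≤ a ∧ a < N + m ∧ a ∈ B)
    (hS : ∀ N, ∀ b ∈ B, ∃ a, N ≤ a ∧ a < N + m ∧ a + b ∈ S a) :
    ∃ c : ℕ → ℕ, (∀ n, n ≤ c n) ∧ (∀ n, (S (c n) ∩ S (c (n + 1))).Nonempty) ∧
      ∀ n, ∃ q, n ≤ q ∧ q ≤ m * mkbCnt (S (c n)) (2 * m * q) := by
  classical
  let U : Ultrafilter ℕ := hyperfilter ℕ
  have hU : ∀ n : ℕ, ∀ᶠ q in (U : Filter ℕ), n ≤ q := fun n =>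
    (Nat.hyperfilter_le_atTop) (eventually_ge_atTop n)
  have key : ∀ N, ∃ a, N ≤ a ∧ ∀ᶠ q in (U : Filter ℕ), q ≤ m * mkbCnt (S a) (2 * m * q) := by
    intro N
    have h1 : ∀ᶠ q in (U : Filter ℕ), ∃ a ∈ (Finset.Ico N (N + m) : Finset ℕ),
        q ≤ m * mkbCnt (S a) (2 * m * q) := by
      filter_upwards [hU (N + m)] with q hq
      by_contra hcon
      push Not at hcon
      choose! α h1 h2 h3 using hS N
      have hqm : q ≤ m * q := Nat.le_mul_of_pos_left q hm
      have hcardle : mkbCnt B (m * q) ≤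
          ∑ a ∈ Finset.Ico N (N + m), mkbCnt (S a) (2 * m * q) := by
        unfold mkbCnt
        rw [← Finset.card_sigma]
        refine Finset.card_le_card_of_injOn (fun b => ⟨α b, α b + b⟩) ?_ ?_
        · intro b hb
          simp only [Finset.coe_filter, Finset.mem_range, Set.mem_setOf_eq] at hb
          have := h1 b hb.2
          have := h2 b hb.2
          have := h3 b hb.2
          have e : 2 * m * q = m * q + m * q := by ring
          simp only [Finset.coe_sigma, Set.mem_sigma_iff, Finset.coe_Ico, Set.mem_Ico,
            Finset.coe_filter, Finset.mem_range, Set.mem_setOf_eq]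
          refine ⟨⟨by assumption, by assumption⟩, by omega, by assumption⟩
        · intro b _ b' _ h
          simp only [Sigma.mk.injEq, heq_eq_eq] at h
          omega
      have h5 := (mkb_cnt_synd B m hB q).trans hcardle
      have h6 : m * ∑ a ∈ Finset.Ico N (N + m), mkbCnt (S a) (2 * m * q) <
          ∑ a ∈ Finset.Ico N (N + m), q := by
        rw [Finset.mul_sum]
        exact Finset.sum_lt_sum_of_nonempty (by simp; omega) hcon
      simp at h6
      have := Nat.mul_le_mul_left m h5
      omega
    have h2 := (Ultrafilter.eventually_exists_mem_iff (Finset.finite_toSet (Finset.Ico N (N + m)))).1 h1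
    obtain ⟨a, ha, h⟩ := h2
    simp at ha
    exact ⟨a, ha.1, h⟩
  choose a ha1 ha2 using key
  obtain ⟨g, hg | hg⟩ := exists_increasing_or_nonincreasing_subseq'
    (fun i j : ℕ => (S i ∩ S j).Nonempty) a
  · refine ⟨fun n => a (g n), fun n => ?_, hg, fun n => ?_⟩
    · exact (g.strictMono.le_apply).trans (ha1 _)
    · exact ((hU n).and (ha2 (g n))).exists
  · exfalso
    have h1 : ∀ᶠ q in (U : Filter ℕ), ∀ i ∈ Finset.range (2 * m * m + 1),
        q ≤ m * mkbCnt (S (a (g i))) (2 * m * q) := by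
      rw [Filter.eventually_all_finset]
      intro i _
      exact ha2 (g i)
    obtain ⟨q, hq1, hq⟩ := ((hU 1).and h1).exists
    have hdisj : ∑ i ∈ Finset.range (2 * m * m + 1), mkbCnt (S (a (g i))) (2 * m * q)
        ≤ 2 * m * q := by
      unfold mkbCnt
      rw [← Finset.card_biUnion]
      · conv_rhs => rw [← Finset.card_range (2 * m * q)]
        apply Finset.card_le_card
        intro x hx
        simp only [Finset.mem_biUnion, Finset.mem_filter] at hx
        obtain ⟨_, _, h, _⟩ := hx
        exact h
      · intro i _ j _ hij
        rw [Function.onFun, Finset.disjoint_left]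
        intro x hx hx'
        simp only [Finset.mem_filter] at hx hx'
        rcases lt_or_gt_of_ne hij with h | h
        · exact hg i j h ⟨x, hx.2, hx'.2⟩
        · exact hg j i h ⟨x, hx'.2, hx.2⟩
    have h2 := Finset.sum_le_sum hq
    rw [← Finset.mul_sum] at h2
    simp only [Finset.sum_const, Finset.card_range, smul_eq_mul] at h2
    have h3 := Nat.mul_le_mul_left m hdisj
    nlinarith

/-- In a Menger space under `Min` with values in `D⁺`, if `f` is a probabilistic
`(m,k)`-B-contraction and `p ∈ S`, then there is a set `I ⊆ ℕ` of positive upper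
Banach density such that `(f^[i] p)_{i ∈ I}` is a Cauchy family. -/
theorem mk_b_contraction_cauchy_subfamily
    {S : Type*} [Nonempty S] (Φ : S → S → ℝ → ℝ)
    (hDplus : ∀ p q : S, MemDplus (Φ p q))
    (hPM1 : ∀ p q : S, (∀ t : ℝ, 0 < t → Φ p q t = 1) ↔ p = q)
    (hPM2 : ∀ p q : S, Φ p q = Φ q p)
    (hPM3 : ∀ p q r : S, ∀ s t : ℝ, 0 < s → 0 < t →
      min (Φ p q s) (Φ q r t) ≤ Φ p r (s + t))
    (m : ℕ) (hm : 1 ≤ m) (k : ℝ) (hk : k ∈ Set.Ioo (0 : ℝ) 1)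
    (f : S → S)
    (hf : ∀ p q : S, ∃ i : ℕ, 1 ≤ i ∧ i ≤ m ∧
      ∀ t : ℝ, 0 < t → Φ p q t ≤ Φ (f^[i] p) (f^[i] q) (k ^ i * t))
    (p : S) :
    ∃ I : Set ℕ, 0 < upperBanachDensity I ∧
      ∀ t : ℝ, 0 < t → ∀ ε : ℝ, 0 < ε → ∃ N : ℕ, ∀ i ∈ I, ∀ j ∈ I,
        N ≤ i → N ≤ j → 1 - ε < Φ (f^[i] p) (f^[j] p) t := by
  have hk0 := hk.1
  have hk1 := hk.2
  have h1k : 0 < 1 - k := by linarith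
  let x : ℕ → S := fun n => f^[n] p
  have hmono : ∀ u v : S, Monotone (Φ u v) := fun u v => (hDplus u v).1.1
  have hself : ∀ u : S, ∀ t : ℝ, 0 < t → Φ u u t = 1 := fun u => (hPM1 u u).2 rfl
  have hstep : ∀ i j : ℕ, ∃ s : ℕ, 1 ≤ s ∧ s ≤ m ∧
      ∀ t : ℝ, 0 < t → Φ (x i) (x j) t ≤ Φ (x (i + s)) (x (j + s)) (k ^ s * t) := by
    intro i j
    obtain ⟨s, h1, h2, h3⟩ := hf (x i) (x j)
    refine ⟨s, h1, h2, fun t ht => ?_⟩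
    have := h3 t ht
    simp only [x, ← Function.iterate_add_apply] at this
    rw [add_comm s i, add_comm s j] at this
    exact this
  have htri : ∀ (u v w : S) (l s t : ℝ), 0 < s → 0 < t → l ≤ Φ u v s → l ≤ Φ v w t →
      l ≤ Φ u w (s + t) := fun u v w l s t hs ht h1 h2 =>
    (le_min h1 h2).trans (hPM3 u v w s t hs ht)
  let G : ℝ → ℝ → Prop := fun l D => 0 < D ∧ ∀ i ≤ m, l ≤ Φ (x 0) (x i) D
  let B : Set ℕ := {b | ∀ l D, G l D → l ≤ Φ (x 0) (x b) (D / (1 - k))}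
  let A : ℕ → Set ℕ := fun b =>
    {a | ∀ t : ℝ, 0 < t → Φ (x 0) (x b) t ≤ Φ (x a) (x (a + b)) (k ^ a * t)}
  have hB : ∀ N, ∃ a, N ≤ a ∧ a < N + m ∧ a ∈ B := by
    refine mkb_synd (· ∈ B) m ?_ ?_ hm
    · intro l D hG
      have h := hG.2 0 (Nat.zero_le _)
      rw [hself _ _ hG.1] at h
      rwa [hself _ _ (div_pos hG.1 h1k)]
    · intro b hb
      obtain ⟨s, hs1, hs2, hs3⟩ := hstep 0 b
      refine ⟨s, hs1, hs2, ?_⟩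
      intro l D hG
      have hD' := div_pos hG.1 h1k
      have h1 := (hb l D hG).trans (hs3 _ hD')
      rw [zero_add] at h1
      have h2 : k ^ s * (D / (1 - k)) ≤ k * (D / (1 - k)) := by
        gcongr
        exact pow_le_of_le_one hk0.le hk1.le (by omega)
      have h3 := htri _ _ _ _ _ _ hG.1 (mul_pos hk0 hD') (hG.2 s hs2)
        (h1.trans (hmono _ _ h2))
      have e : D + k * (D / (1 - k)) = D / (1 - k) := by field_simp; ring
      rwa [e] at h3
  have hA : ∀ b N, ∃ a, N ≤ a ∧ a < N + m ∧ a ∈ A b := by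
    intro b
    refine mkb_synd (· ∈ A b) m ?_ ?_ hm
    · intro t ht
      simp
    · intro a ha
      obtain ⟨s, hs1, hs2, hs3⟩ := hstep a (a + b)
      refine ⟨s, hs1, hs2, ?_⟩
      intro t ht
      have h := (ha t ht).trans (hs3 _ (by positivity))
      have e1 : a + b + s = a + s + b := by ring
      have e2 : k ^ s * (k ^ a * t) = k ^ (a + s) * t := by ring
      rwa [e1, e2] at h
  let T : ℕ → Set ℕ := fun a => {n | ∃ b ∈ B, n = a + b ∧ a ∈ A b}
  obtain ⟨c, hc1, hc2, hc3⟩ := mkb_chain T m hm B hB (by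
    intro N b hb
    obtain ⟨a, h1, h2, h3⟩ := hA b N
    exact ⟨a, h1, h2, b, hb, rfl, h3⟩)
  choose q hq1 hq2 using hc3
  let I : Set ℕ := {i | ∃ r, i ∈ T (c r) ∧ i < 2 * m * q r}
  refine ⟨I, ?_, ?_⟩
  · apply mkb_density I m hm
    intro M
    refine ⟨q M, hq1 M, (hq2 M).trans (Nat.mul_le_mul_left m ?_)⟩
    classical
    unfold mkbCnt
    apply Finset.card_le_card
    intro y hy
    simp only [Finset.mem_filter, Finset.mem_range] at hy ⊢
    exact ⟨hy.1, M, hy.2, hy.1⟩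
  · intro t ht ε hε
    obtain ⟨D0, hG⟩ : ∃ D0, G (1 - ε / 2) D0 := by
      have h1 : ∀ᶠ D in atTop, ∀ i ∈ Finset.range (m + 1), 1 - ε / 2 < Φ (x 0) (x i) D := by
        rw [Filter.eventually_all_finset]
        intro i _
        exact (hDplus (x 0) (x i)).2.eventually_const_lt (by linarith)
      obtain ⟨D, h1, h2⟩ := (h1.and (eventually_gt_atTop 0)).exists
      exact ⟨D, h2, fun i hi => (h1 i (by simp; omega)).le⟩
    set l := 1 - ε / 2 with hl
    set D := D0 / (1 - k) with hD
    have hDpos : 0 < D := div_pos hG.1 h1k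
    have hstar : ∀ r, ∀ i ∈ T (c r), l ≤ Φ (x (c r)) (x i) (k ^ r * D) := by
      rintro r i ⟨b, hb, rfl, ha⟩
      refine ((hb l D0 hG).trans (ha D hDpos)).trans (hmono _ _ ?_)
      have := pow_le_pow_of_le_one hk0.le hk1.le (hc1 r)
      gcongr
    have hcons : ∀ r, l ≤ Φ (x (c r)) (x (c (r + 1))) (2 * D * k ^ r) := by
      intro r
      obtain ⟨i, hi1, hi2⟩ := hc2 r
      have h1 := hstar r i hi1
      have h2 := hstar (r + 1) i hi2
      rw [hPM2] at h2
      refine (htri _ _ _ _ _ _ (by positivity) (by positivity) h1 h2).trans (hmono _ _ ?_)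
      have := pow_le_pow_of_le_one hk0.le hk1.le (Nat.le_succ r)
      simp only [Nat.succ_eq_add_one] at this
      nlinarith
    have hl1 : l ≤ 1 := by linarith
    have hch : ∀ d r, l ≤ Φ (x (c r)) (x (c (r + d))) (2 * D * k ^ r / (1 - k)) := by
      intro d
      induction d with
      | zero =>
        intro r
        rw [add_zero, hself _ _ (by positivity)]
        exact hl1
      | succ d ih =>
        intro r
        have h1 := htri _ _ _ _ _ _ (by positivity) (by positivity) (hcons r) (ih (r + 1))
        have e1 : r + 1 + d = r + (d + 1) := by ring
        have e : 2 * D * k ^ r + 2 * D * k ^ (r + 1) / (1 - k) = 2 * D * k ^ r / (1 - k) := by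
          have := h1k.ne'
          field_simp
          ring
        rwa [e1, e] at h1
    have hbig : ∀ R r, R ≤ r → ∀ i ∈ T (c r),
        l ≤ Φ (x (c R)) (x i) (2 * D * k ^ R / (1 - k) + k ^ R * D) := by
      intro R r hr i hi
      obtain ⟨d, rfl⟩ := Nat.exists_eq_add_of_le hr
      refine (htri _ _ _ _ _ _ (by positivity) (by positivity) (hch d R)
        (hstar _ i hi)).trans (hmono _ _ ?_)
      have := pow_le_pow_of_le_one hk0.le hk1.le hr
      gcongr
    have hlim : Tendsto (fun R : ℕ => 2 * (2 * D * k ^ R / (1 - k) + k ^ R * D)) atTop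
        (nhds 0) := by
      have h0 := tendsto_pow_atTop_nhds_zero_of_lt_one hk0.le hk1
      have := h0.const_mul (2 * (2 * D / (1 - k) + D))
      rw [mul_zero] at this
      refine this.congr fun R => ?_
      ring
    obtain ⟨R, hR⟩ := (hlim.eventually_lt_const ht).exists
    have hloc : ∀ i ∈ I, ∑ r ∈ Finset.range R, 2 * m * q r ≤ i →
        l ≤ Φ (x (c R)) (x i) (2 * D * k ^ R / (1 - k) + k ^ R * D) := by
      rintro i ⟨r, hr1, hr2⟩ hi
      refine hbig R r ?_ i hr1
      by_contra hlt
      have := Finset.single_le_sum (f := fun r => 2 * m * q r) (fun _ _ => Nat.zero_le _)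
        (Finset.mem_range.2 (not_le.1 hlt))
      omega
    refine ⟨∑ r ∈ Finset.range R, 2 * m * q r, fun i hi j hj hNi hNj => ?_⟩
    have h1 := hloc i hi hNi
    have h2 := hloc j hj hNj
    rw [hPM2] at h1
    have h3 := (htri _ _ _ _ _ _ (by positivity) (by positivity) h1 h2).trans
      (hmono _ _ (by linarith : _ ≤ t))
    exact lt_of_lt_of_le (by linarith) h3
end

section
/- Let V be a real vector space with probabilistic norm ν, and let f : V → V be a C-contraction with constant k ∈ (0,1). Then for every ε ∈ (0,1) there exists n₀ = n₀(ε) ∈ ℕ such that for all n > n₀ and for every p ∈ V, ν_{f^n p}(ε) > 1 − ε. -/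
/-- For a C-contraction `f` on a PN space, for every `ε ∈ (0,1)` there is `n₀` such
that `ν_{f^n p}(ε) > 1 - ε` for all `n > n₀` and all `p`. -/
theorem c_contraction_iterates_to_theta
    {V : Type*} [AddCommGroup V] [Module ℝ V] (ν : V → ℝ → ℝ)
    (hν : ∀ p : V, Monotone (ν p) ∧ (∀ t : ℝ, 0 ≤ ν p t ∧ ν p t ≤ 1) ∧
      (∀ t : ℝ, t ≤ 0 → ν p t = 0))
    (k : ℝ) (hk : k ∈ Set.Ioo (0 : ℝ) 1) (f : V → V)
    (hf : ∀ p : V, ∀ t : ℝ, 0 < t → 1 - t < ν p t → 1 - k * t < ν (f p) (k * t)) :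
    ∀ ε : ℝ, ε ∈ Set.Ioo (0 : ℝ) 1 → ∃ n₀ : ℕ, ∀ n : ℕ, n₀ < n → ∀ p : V,
      1 - ε < ν (f^[n] p) ε := by
  intro ε hε
  obtain ⟨hk0, hk1⟩ := hk
  have key : ∀ n : ℕ, ∀ p : V, 1 - k ^ n * 2 < ν (f^[n] p) (k ^ n * 2) := by
    intro n p
    induction n with
    | zero =>
      have := ((hν p).2.1 (k ^ 0 * 2)).1
      simp only [Function.iterate_zero, id] at *
      linarith [pow_zero k]
    | succ n ih =>
      have h := hf _ _ (by positivity) ih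
      rw [Function.iterate_succ_apply', pow_succ', mul_assoc]
      exact h
  obtain ⟨N, hN⟩ := exists_pow_lt_of_lt_one (half_pos hε.1) hk1
  refine ⟨N, fun n hn p => ?_⟩
  have h1 : k ^ n ≤ k ^ N := pow_le_pow_of_le_one hk0.le hk1.le hn.le
  have h2 : k ^ n * 2 ≤ ε := by linarith
  have h3 := (hν (f^[n] p)).1 h2
  linarith [key n p]
end

section
/- Let V be a real vector space with probabilistic norm ν satisfying (N1), and let f : V → V be a C-contraction with constant k ∈ (0,1). Then f has at most one fixed point, namely the null vector θ: if f p = p for some p ∈ V, then p = θ. Moreover, if f is a linear map, then θ is a fixed point of f, so f has exactly one fixed point. -/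
/-- A C-contraction on a PN space has at most one fixed point, the null vector; if
moreover `f` is linear, then it has exactly one fixed point. -/
theorem c_contraction_fixed_point
    {V : Type*} [AddCommGroup V] [Module ℝ V] (ν : V → ℝ → ℝ)
    (hν : ∀ p : V, Monotone (ν p) ∧ (∀ t : ℝ, 0 ≤ ν p t ∧ ν p t ≤ 1) ∧
      (∀ t : ℝ, t ≤ 0 → ν p t = 0))
    (hN1 : ∀ p : V, (∀ t : ℝ, 0 < t → ν p t = 1) ↔ p = 0)
    (k : ℝ) (hk : k ∈ Set.Ioo (0 : ℝ) 1) (f : V → V)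
    (hf : ∀ p : V, ∀ t : ℝ, 0 < t → 1 - t < ν p t → 1 - k * t < ν (f p) (k * t)) :
    (∀ p : V, f p = p → p = 0) ∧ (IsLinearMap ℝ f → ∃! p : V, f p = p) := by
  obtain ⟨hk0, hk1⟩ := hk
  have main : ∀ p : V, f p = p → p = 0 := by
    intro p hp
    obtain ⟨hmono, hb, -⟩ := hν p
    have key : ∀ n : ℕ, 1 - k ^ n * 2 < ν p (k ^ n * 2) := by
      intro n
      induction n with
      | zero =>
        have := (hb (k ^ 0 * 2)).1
        have h2 : k ^ 0 * 2 = 2 := by simp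
        linarith
      | succ n ih =>
        have h := hf p (k ^ n * 2) (by positivity) ih
        rw [hp] at h
        have e : k ^ (n + 1) * 2 = k * (k ^ n * 2) := by ring
        rw [e]
        exact h
    refine (hN1 p).1 fun t ht => le_antisymm (hb t).2 ?_
    refine le_of_forall_pos_le_add fun ε hε => ?_
    obtain ⟨n, hn⟩ := exists_pow_lt_of_lt_one (show 0 < min t ε / 2 by positivity) hk1
    have h1 : k ^ n * 2 ≤ t := by linarith [min_le_left t ε]
    have h2 : k ^ n * 2 ≤ ε := by linarith [min_le_right t ε]
    linarith [key n, hmono h1]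
  exact ⟨main, fun hl => ⟨0, hl.map_zero, main⟩⟩
end
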